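/- arXiv:1004.5439 — 2 statements merged into one kernel-verified Lean document; each statement's English description precedes it below -/
import Mathlib

section
/- Let Q(t) ∈ ℤ[t] be monic of degree r with Q mod 2 irreducible over ℤ/2 and odd constant coefficient, and let λ be the multiplicative order of t in (ℤ/2)[t]/(Q). Then t^λ ≡ 1 (mod 4, Q) if and only if Q(−t) satisfies Condition S. -/
/-!
Let `G(t²) = Q(t) Q(-t)` define the Graeffe transform `G` of `Q`. Splitting `Q` into its even and
odd parts turns Condition S for `Q(-t)` into `G ≡ (-1)^r Q (mod 4)`.

The transform is multiplicative, it sends `t^n - 1` to `-(t^n - 1)` for odd `n`, and its value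
modulo 4 depends only on its argument modulo 2. Hence, if `Q` divides `t^n - 1` modulo 2, then `G`
divides `t^n - 1` modulo 4: the transform *is* the Hensel lift of the factor `Q`. As `t^n - 1` is
separable modulo 4, such a lift is unique, so `Q` itself divides `t^n - 1` modulo 4 if and only if
it agrees with `G` modulo 4 up to the sign `(-1)^r`.
-/

open Polynomial

/-- Condition S: `Q(t)² + Q(−t)² ≡ 2·q_r·Q(t²) (mod 8)` where `q_r` is the leading
coefficient of `Q`. -/
def conditionS (Q : Polynomial ℤ) : Prop :=
  (Q ^ 2 + (Q.comp (-X)) ^ 2).map (Int.castRingHom (ZMod 8)) =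
    (C (2 * Q.leadingCoeff) * Q.comp (X ^ 2)).map (Int.castRingHom (ZMod 8))

lemma map_intCast_zmod_eq_zero_iff {m : ℕ} {p : ℤ[X]} :
    p.map (Int.castRingHom (ZMod m)) = 0 ↔ (m : ℤ[X]) ∣ p := by
  rw [← map_natCast C, C_dvd_iff_dvd_coeff, Polynomial.ext_iff]
  simp [ZMod.intCast_zmod_eq_zero_iff_dvd]

lemma map_intCast_zmod_eq_iff {m : ℕ} {p q : ℤ[X]} :
    p.map (Int.castRingHom (ZMod m)) = q.map (Int.castRingHom (ZMod m)) ↔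
      (m : ℤ[X]) ∣ p - q := by
  rw [← sub_eq_zero, ← Polynomial.map_sub, map_intCast_zmod_eq_zero_iff]

lemma mem_span_natCast_pair_iff_map_dvd_map {m : ℕ} {p q : ℤ[X]} :
    p ∈ Ideal.span {(m : ℤ[X]), q} ↔
      q.map (Int.castRingHom (ZMod m)) ∣ p.map (Int.castRingHom (ZMod m)) := by
  rw [Ideal.mem_span_pair]
  constructor
  · rintro ⟨a, b, rfl⟩
    refine ⟨b.map (Int.castRingHom (ZMod m)), ?_⟩
    rw [← Polynomial.map_mul, map_intCast_zmod_eq_iff]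
    exact ⟨a, by ring⟩
  · rintro ⟨b', hb⟩
    obtain ⟨b, rfl⟩ := map_surjective (Int.castRingHom (ZMod m)) ZMod.intCast_surjective b'
    rw [← Polynomial.map_mul, map_intCast_zmod_eq_iff] at hb
    obtain ⟨a, ha⟩ := hb
    exact ⟨a, b, by linear_combination -ha⟩

section EvenOdd

variable {R : Type*}

lemma exists_eq_expand_add_X_mul_expand [CommSemiring R] (p : R[X]) :
    ∃ e o : R[X], p = expand R 2 e + X * expand R 2 o := by
  induction p using Polynomial.induction_on' with
  | add p q hp hq =>
    obtain ⟨e, o, rfl⟩ := hp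
    obtain ⟨e', o', rfl⟩ := hq
    exact ⟨e + e', o + o', by simp only [map_add]; ring⟩
  | monomial n a =>
    obtain ⟨k, rfl | rfl⟩ := n.even_or_odd'
    · exact ⟨monomial k a, 0, by simp [expand_monomial, mul_comm]⟩
    · exact ⟨0, monomial k a, by simp [expand_monomial, X_mul_monomial, mul_comm]⟩

lemma expand_add_X_mul_expand_comp_neg_X [CommRing R] (e o : R[X]) :
    (expand R 2 e + X * expand R 2 o).comp (-X) = expand R 2 e - X * expand R 2 o := by
  simp [expand_eq_comp_X_pow, comp_assoc, sub_eq_add_neg]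

lemma expand_dvd_expand_iff [CommSemiring R] {n : ℕ} (hn : n ≠ 0) {p q : R[X]} :
    expand R n p ∣ expand R n q ↔ p ∣ q := by
  refine ⟨fun ⟨d, hd⟩ => ⟨contract n d, ?_⟩, map_dvd (expand R n)⟩
  rw [← contract_expand n (f := q) hn, hd, mul_comm, contract_mul_expand hn, mul_comm]

end EvenOdd

section Graeffe

variable {R : Type*} [CommRing R]

/-- The Graeffe transform of `p`: the polynomial `g` with `g(t²) = p(t) p(-t)`, whose roots are
the squares of the roots of `p`. The sign that would make `g` monic for a monic `p` is left out, so
that the transform is multiplicative. -/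
noncomputable def graeffe (p : R[X]) : R[X] :=
  contract 2 (p * p.comp (-X))

lemma graeffe_expand_add_X_mul_expand (e o : R[X]) :
    graeffe (expand R 2 e + X * expand R 2 o) = e ^ 2 - X * o ^ 2 := by
  have h : expand R 2 (e ^ 2 - X * o ^ 2) =
      (expand R 2 e + X * expand R 2 o) * (expand R 2 e - X * expand R 2 o) := by
    simp only [map_sub, map_mul, map_pow, expand_X]
    ring
  rw [graeffe, expand_add_X_mul_expand_comp_neg_X, ← h, contract_expand 2 two_ne_zero]

lemma expand_graeffe (p : R[X]) : expand R 2 (graeffe p) = p * p.comp (-X) := by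
  obtain ⟨e, o, rfl⟩ := exists_eq_expand_add_X_mul_expand p
  rw [graeffe_expand_add_X_mul_expand, expand_add_X_mul_expand_comp_neg_X]
  simp only [map_sub, map_mul, map_pow, expand_X]
  ring

lemma graeffe_mul (p q : R[X]) : graeffe (p * q) = graeffe p * graeffe q := by
  refine expand_injective two_pos ?_
  simp only [expand_graeffe, map_mul, mul_comp]
  ring

lemma graeffe_X_pow_sub_one {n : ℕ} (hn : Odd n) :
    graeffe (X ^ n - 1 : R[X]) = -(X ^ n - 1) := by
  refine expand_injective two_pos ?_
  simp only [expand_graeffe, sub_comp, X_pow_comp, one_comp, hn.neg_pow, map_neg, map_sub,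
    map_pow, expand_X, map_one]
  ring

lemma monic_neg_one_pow_natDegree_mul_graeffe {p : R[X]} (hp : p.Monic) :
    ((-1) ^ p.natDegree * graeffe p).Monic := by
  have h : expand R 2 ((-1) ^ p.natDegree * graeffe p) =
      p * ((-1) ^ p.natDegree * p.comp (-X)) := by
    simp only [map_mul, map_pow, map_neg, map_one, expand_graeffe]
    ring
  rw [← monic_expand_iff two_pos, h]
  exact hp.mul hp.neg_one_pow_natDegree_mul_comp_neg_X

lemma four_dvd_graeffe_sub_graeffe {p q : R[X]} (h : 2 ∣ p - q) :
    4 ∣ graeffe p - graeffe q := by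
  obtain ⟨d, hd⟩ := h
  obtain ⟨e, o, rfl⟩ := exists_eq_expand_add_X_mul_expand q
  obtain ⟨e', o', rfl⟩ := exists_eq_expand_add_X_mul_expand d
  have hp : p = expand R 2 (e + 2 * e') + X * expand R 2 (o + 2 * o') := by
    simp only [map_add, map_mul, map_ofNat]
    linear_combination hd
  rw [hp, graeffe_expand_add_X_mul_expand, graeffe_expand_add_X_mul_expand]
  exact ⟨e * e' + e' ^ 2 - X * (o * o' + o' ^ 2), by ring⟩

lemma X_pow_sub_one_mem_span_four_graeffe {n : ℕ} (hn : Odd n) {p : R[X]}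
    (h : X ^ n - 1 ∈ Ideal.span {2, p}) : X ^ n - 1 ∈ Ideal.span {4, graeffe p} := by
  obtain ⟨a, c, hac⟩ := Ideal.mem_span_pair.1 h
  have hdvd : 2 ∣ X ^ n - 1 - c * p := ⟨a, by linear_combination -hac⟩
  obtain ⟨d, hd⟩ := four_dvd_graeffe_sub_graeffe hdvd
  rw [graeffe_X_pow_sub_one hn, graeffe_mul] at hd
  exact Ideal.mem_span_pair.2 ⟨-d, -graeffe c, by linear_combination hd⟩

lemma two_dvd_neg_one_pow_mul_graeffe_sub (k : ℕ) (p : ℤ[X]) :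
    2 ∣ (-1) ^ k * graeffe p - p := by
  obtain ⟨e, o, rfl⟩ := exists_eq_expand_add_X_mul_expand p
  rw [graeffe_expand_add_X_mul_expand]
  refine map_intCast_zmod_eq_iff.1 ?_
  simp [CharTwo.neg_eq, CharTwo.sub_eq_add, map_expand, ZMod.expand_card]

end Graeffe

section Separable

variable {R : Type*} [CommRing R] {f g h : R[X]}

lemma dvd_of_dvd_separable_of_isNilpotent_sub (hh : h.Separable) (hf : f ∣ h) (hg : g ∣ h)
    (hfg : IsNilpotent (f - g)) : f ∣ g := by
  obtain ⟨c, rfl⟩ := hg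
  suffices IsCoprime f c from this.dvd_of_dvd_mul_right hf
  obtain ⟨u, v, huv⟩ := hh.isCoprime
  have hunit : IsUnit (u * f + v * c) := by
    rw [show u * f + v * c = 1 + u * (f - g) by linear_combination huv]
    exact ((Commute.all u (f - g)).isNilpotent_mul_left hfg).isUnit_one_add
  obtain ⟨w, hw⟩ := hunit.exists_left_inv
  exact ⟨w * u, w * v, by linear_combination hw⟩

lemma eq_of_dvd_separable_of_isNilpotent_sub (hf : f.Monic) (hg : g.Monic) (hh : h.Separable)
    (hfh : f ∣ h) (hgh : g ∣ h) (hfg : IsNilpotent (f - g)) : f = g := by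
  have hdvd : f ∣ g := dvd_of_dvd_separable_of_isNilpotent_sub hh hfh hgh hfg
  have hdvd' : g ∣ f := by
    refine dvd_of_dvd_separable_of_isNilpotent_sub hh hgh hfh ?_
    rwa [← neg_sub, isNilpotent_neg_iff]
  nontriviality R
  have hdeg : g.natDegree ≤ f.natDegree := by
    by_contra! hlt
    exact hg.not_dvd_of_natDegree_lt hf.ne_zero hlt hdvd'
  exact (eq_of_monic_of_dvd_of_natDegree_le hf hg hdvd hdeg).symm

end Separable

lemma conditionS_comp_neg_X_iff_of_eq_expand_add {Q : ℤ[X]} (hQ : Q.Monic) {e o : ℤ[X]}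
    (h : Q = expand ℤ 2 e + X * expand ℤ 2 o) :
    conditionS (Q.comp (-X)) ↔ 4 ∣ e ^ 2 + X * o ^ 2 - (-1) ^ Q.natDegree * Q.comp (-X) := by
  have hlead : C (2 * (Q.comp (-X)).leadingCoeff) = 2 * (-1 : ℤ[X]) ^ Q.natDegree := by
    rw [leadingCoeff_comp (by simp)]
    simp [hQ.leadingCoeff]
  have hcomp : (Q.comp (-X)).comp (-X) = Q := by simp [comp_assoc]
  have hneg : Q.comp (-X) = expand ℤ 2 e - X * expand ℤ 2 o := by
    rw [h, expand_add_X_mul_expand_comp_neg_X]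
  have hsq : Q.comp (-X) ^ 2 + Q ^ 2 = 2 * expand ℤ 2 (e ^ 2 + X * o ^ 2) := by
    rw [hneg, h]
    simp only [map_add, map_mul, map_pow, expand_X]
    ring
  have hfactor : Q.comp (-X) ^ 2 + Q ^ 2 -
      2 * (-1) ^ Q.natDegree * expand ℤ 2 (Q.comp (-X)) =
      2 * expand ℤ 2 (e ^ 2 + X * o ^ 2 - (-1) ^ Q.natDegree * Q.comp (-X)) := by
    simp only [hsq, map_sub, map_mul, map_pow, map_neg, map_one]
    ring
  have hfour : (4 : ℤ[X]) = expand ℤ 2 4 := (map_ofNat _ 4).symm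
  rw [conditionS, hlead, hcomp, ← expand_eq_comp_X_pow, map_intCast_zmod_eq_iff, hfactor,
    show ((8 : ℕ) : ℤ[X]) = 2 * 4 by norm_num, mul_dvd_mul_iff_left two_ne_zero, hfour,
    expand_dvd_expand_iff two_ne_zero, ← hfour]

lemma conditionS_comp_neg_X_iff_four_dvd_graeffe_sub {Q : ℤ[X]} (hQ : Q.Monic) :
    conditionS (Q.comp (-X)) ↔ 4 ∣ (-1) ^ Q.natDegree * graeffe Q - Q := by
  obtain ⟨e, o, h⟩ := exists_eq_expand_add_X_mul_expand Q
  rw [conditionS_comp_neg_X_iff_of_eq_expand_add hQ h]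
  have hneg : Q.comp (-X) = 2 * expand ℤ 2 e - Q := by
    rw [h, expand_add_X_mul_expand_comp_neg_X]
    ring
  have hgraeffe : graeffe Q = e ^ 2 - X * o ^ 2 := by rw [h, graeffe_expand_add_X_mul_expand]
  set s : ℤ[X] := (-1) ^ Q.natDegree with hs
  have hss : s * s = 1 := by rw [hs, ← mul_pow, neg_one_mul, neg_neg, one_pow]
  have htwo : 2 ∣ e ^ 2 - s * expand ℤ 2 e := by
    refine map_intCast_zmod_eq_iff.1 ?_
    simp [s, CharTwo.neg_eq, map_expand, ZMod.expand_card]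
  have hfour : 4 ∣ 2 * (e ^ 2 - s * expand ℤ 2 e) := by
    obtain ⟨d, hd⟩ := htwo
    exact ⟨d, by rw [hd]; ring⟩
  calc 4 ∣ e ^ 2 + X * o ^ 2 - s * Q.comp (-X)
      ↔ 4 ∣ 2 * (e ^ 2 - s * expand ℤ 2 e) + (-s) * (s * graeffe Q - Q) := by
        rw [hneg, hgraeffe]
        congr! 1
        linear_combination (e ^ 2 - X * o ^ 2) * hss
    _ ↔ 4 ∣ (-s) * (s * graeffe Q - Q) := dvd_add_right hfour
    _ ↔ 4 ∣ s * graeffe Q - Q := (IsUnit.of_mul_eq_one (-s) (by simpa using hss)).dvd_mul_left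

theorem X_pow_sub_one_mem_span_four_iff_conditionS {Q : ℤ[X]} (hQ : Q.Monic) {n : ℕ} (hn : Odd n)
    (h2 : X ^ n - 1 ∈ Ideal.span {2, Q}) :
    X ^ n - 1 ∈ Ideal.span {4, Q} ↔ conditionS (Q.comp (-X)) := by
  let φ := Int.castRingHom (ZMod 4)
  set G : ℤ[X] := (-1) ^ Q.natDegree * graeffe Q with hG
  have hdvd : G.map φ ∣ (X ^ n - 1 : ℤ[X]).map φ := by
    have hsign : IsUnit (((-1 : ℤ[X]) ^ Q.natDegree).map φ) :=
      (isUnit_neg_one.pow _).map (mapRingHom φ)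
    rw [hG, Polynomial.map_mul, hsign.mul_left_dvd]
    exact mem_span_natCast_pair_iff_map_dvd_map.1 (X_pow_sub_one_mem_span_four_graeffe hn h2)
  have hsep : ((X ^ n - 1 : ℤ[X]).map φ).Separable := by
    have hunit : IsUnit (n : ZMod 4) := by
      rw [ZMod.isUnit_iff_coprime]
      exact hn.coprime_two_right.pow_right 2
    simpa using separable_X_pow_sub_C_unit 1 hunit
  have hnil : IsNilpotent (G.map φ - Q.map φ) := by
    obtain ⟨d, hd⟩ := two_dvd_neg_one_pow_mul_graeffe_sub Q.natDegree Q
    have hfour : (4 : (ZMod 4)[X]) = 0 := mod_cast CharP.cast_eq_zero (ZMod 4)[X] 4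
    refine ⟨2, ?_⟩
    rw [← Polynomial.map_sub, hd, Polynomial.map_mul, Polynomial.map_ofNat]
    linear_combination d.map φ ^ 2 * hfour
  calc X ^ n - 1 ∈ Ideal.span {4, Q}
      ↔ Q.map φ ∣ (X ^ n - 1 : ℤ[X]).map φ := mem_span_natCast_pair_iff_map_dvd_map
    _ ↔ G.map φ = Q.map φ :=
      ⟨fun hQdvd => eq_of_dvd_separable_of_isNilpotent_sub
        ((monic_neg_one_pow_natDegree_mul_graeffe hQ).map φ) (hQ.map φ) hsep hdvd hQdvd hnil,
        fun h => h ▸ hdvd⟩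
    _ ↔ 4 ∣ G - Q := map_intCast_zmod_eq_iff
    _ ↔ conditionS (Q.comp (-X)) := (conditionS_comp_neg_X_iff_four_dvd_graeffe_sub hQ).symm

lemma mk_X_pow_eq_one_iff {R : Type*} [CommRing R] {q : R[X]} {k : ℕ} :
    Ideal.Quotient.mk (Ideal.span {q}) X ^ k = 1 ↔ q ∣ X ^ k - 1 := by
  rw [← map_pow, ← map_one (Ideal.Quotient.mk _), Ideal.Quotient.eq, Ideal.mem_span_singleton]

section OrderOf

variable {K : Type*} [Field K] [Finite K] {q : K[X]}

lemma isOfFinOrder_mk_X (h0 : q.coeff 0 ≠ 0) :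
    IsOfFinOrder (Ideal.Quotient.mk (Ideal.span {q}) X) := by
  have hq : q ≠ 0 := by
    rintro rfl
    exact h0 (coeff_zero 0)
  have : Module.Finite K (K[X] ⧸ Ideal.span {q}) := (AdjoinRoot.powerBasis hq).finite
  have : Finite (K[X] ⧸ Ideal.span {q}) := Module.finite_of_finite K
  have hcop : IsCoprime X q := irreducible_X.coprime_iff_not_dvd.2 (mt X_dvd_iff.1 h0)
  obtain ⟨u, v, huv⟩ := hcop
  refine isOfFinOrder_iff_isUnit.2 (IsUnit.of_mul_eq_one_right (Ideal.Quotient.mk _ u) ?_)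
  rw [← map_mul, ← map_one (Ideal.Quotient.mk _), Ideal.Quotient.eq, Ideal.mem_span_singleton]
  exact ⟨-v, by linear_combination huv⟩

lemma not_dvd_orderOf_mk_X (p : ℕ) [Fact p.Prime] [CharP K p] (hq : Squarefree q)
    (h0 : q.coeff 0 ≠ 0) : ¬ p ∣ orderOf (Ideal.Quotient.mk (Ideal.span {q}) X) := by
  have hp : p.Prime := Fact.out
  have hpos := (isOfFinOrder_mk_X h0).orderOf_pos
  rintro ⟨k, hk⟩
  have hdvd : q ∣ (X ^ k - 1) ^ p := by
    rw [sub_pow_char, one_pow, ← pow_mul, mul_comm, ← hk, ← mk_X_pow_eq_one_iff,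
      pow_orderOf_eq_one]
  have hk_pos : 0 < k := Nat.pos_of_mul_pos_left (hk ▸ hpos)
  have hle := orderOf_le_of_pow_eq_one hk_pos
    (mk_X_pow_eq_one_iff.2 ((hq.dvd_pow_iff_dvd hp.ne_zero).1 hdvd))
  rw [hk] at hle
  exact hle.not_gt (lt_mul_of_one_lt_left hk_pos hp.one_lt)

end OrderOf

theorem stmt11_general (Q : ℤ[X]) (hmonic : Q.Monic) (hconst : Odd (Q.coeff 0))
    (hsq : Squarefree (Q.map (Int.castRingHom (ZMod 2)))) (lam : ℕ)
    (hlam : lam = orderOf (Ideal.Quotient.mk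
      (Ideal.span {Q.map (Int.castRingHom (ZMod 2))}) (X : (ZMod 2)[X]))) :
    (X ^ lam - 1 ∈ Ideal.span ({C 4, Q} : Set ℤ[X])) ↔ conditionS (Q.comp (-X)) := by
  have hodd : Odd lam := by
    have h0 : (Q.map (Int.castRingHom (ZMod 2))).coeff 0 ≠ 0 := by
      rwa [coeff_map, eq_intCast, Ne, ZMod.intCast_eq_zero_iff_even, Int.not_even_iff_odd]
    rw [← Nat.not_even_iff_odd, even_iff_two_dvd, hlam]
    exact not_dvd_orderOf_mk_X 2 hsq h0
  have hmem : X ^ lam - 1 ∈ Ideal.span {2, Q} := by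
    refine mem_span_natCast_pair_iff_map_dvd_map.2 ?_
    have hpow := mk_X_pow_eq_one_iff.1 (hlam ▸ pow_orderOf_eq_one _)
    simpa using hpow
  exact X_pow_sub_one_mem_span_four_iff_conditionS hmonic hodd hmem

theorem stmt11 (Q : Polynomial ℤ) (r : ℕ) (hr : Q.natDegree = r)
    (hmonic : Q.Monic) (hconst : Odd (Q.coeff 0))
    (hirr : Irreducible (Q.map (Int.castRingHom (ZMod 2))))
    (lam : ℕ)
    (hlam : lam = orderOf (Ideal.Quotient.mk
      (Ideal.span {Q.map (Int.castRingHom (ZMod 2))}) (X : Polynomial (ZMod 2)))) :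
    (X ^ lam - 1 ∈ Ideal.span ({C 4, Q} : Set (Polynomial ℤ))) ↔
      conditionS (Q.comp (-X)) :=
  stmt11_general Q hmonic hconst hirr.squarefree lam hlam
end

section
/- Let Q(t) ∈ ℤ[t] be monic of degree r with Q mod 2 irreducible and odd constant coefficient, and let λ be the multiplicative order of t in (ℤ/2)[t]/(Q). If Q(−t) satisfies Condition S, then for all w ≥ 2, t^{2^{w−2} λ} ≡ 1 (mod 2^w, Q); in particular the multiplicative order of t in (ℤ/2^w)[t]/(Q) is at most 2^{w−2} λ. -/
open Polynomial

/-!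
Work in `A = ℤ[t]/(Q)`. Writing `Q(-t) = Q(t) + 2D(t)`, Condition S for `Q(-t)` becomes
`q Q(t²) ≡ Q(t) Q(-t) (mod 4)` with `q` odd. So `Q(t²)` vanishes in `A/4`, and the Frobenius lift
`t ↦ t²` of `ℤ[t]` descends to an endomorphism `φ` of `A/4`. If `t ^ m = 1 + 2a` in `A`, then in
`A/4` the element `t ^ (2m) = (1 + 2a)² = 1` also equals `φ (t ^ m) = 1 + 2a²`. Hence `4 ∣ 2a²`
in `A`; as `2` is regular in `A` and `A/2` is reduced, `2 ∣ a`, so `t ^ m` is already `1` modulo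
`4`. Each further squaring gains one more power of `2`. The descent of the Frobenius lift works
for every prime `p` in place of `2`.
-/

section CommRing

variable {R : Type*} [CommRing R]

theorem pow_add_dvd_pow_pow_sub_pow_pow {n : ℕ} {a b : R} {j : ℕ}
    (h : (n : R) ^ (j + 1) ∣ a - b) (k : ℕ) :
    (n : R) ^ (j + 1 + k) ∣ a ^ n ^ k - b ^ n ^ k := by
  induction k with
  | zero => simpa using h
  | succ k ih =>
    have hn : (n : R) ∣ a ^ n ^ k - b ^ n ^ k := (dvd_pow_self _ (by lia)).trans ih
    rw [pow_succ n k, pow_mul, pow_mul, ← geom_sum₂_mul, ← add_assoc, pow_succ']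
    exact mul_dvd_mul (dvd_geom_sum₂_self hn) ih

theorem adjoinRoot_of_dvd_mk_iff {r : R} {f g : R[X]} :
    AdjoinRoot.of f r ∣ AdjoinRoot.mk f g ↔ g ∈ Ideal.span {C r, f} := by
  rw [Ideal.mem_span_pair]
  constructor
  · rintro ⟨c, hc⟩
    obtain ⟨a, rfl⟩ := AdjoinRoot.mk_surjective c
    rw [← AdjoinRoot.mk_C, ← map_mul, AdjoinRoot.mk_eq_mk] at hc
    obtain ⟨b, hb⟩ := hc
    exact ⟨a, b, by linear_combination -hb⟩
  · rintro ⟨a, b, rfl⟩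
    simp

theorem isRegular_adjoinRoot_of [IsDomain R] {r : R} (hr : Prime r) {f : R[X]}
    (hf : ¬ C r ∣ f) : IsRegular (AdjoinRoot.of f r) := by
  rw [isRegular_iff_eq_zero_of_mul]
  have hC : Prime (C r) := prime_C_iff.mpr hr
  suffices ∀ a, AdjoinRoot.of f r * a = 0 → a = 0 from
    ⟨this, fun a ha => this a (by rwa [mul_comm])⟩
  intro a ha
  obtain ⟨g, rfl⟩ := AdjoinRoot.mk_surjective a
  rw [← AdjoinRoot.mk_C, ← map_mul, AdjoinRoot.mk_eq_zero] at ha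
  obtain ⟨q, hq⟩ := ha
  obtain ⟨q', rfl⟩ : C r ∣ q := (hC.dvd_or_dvd ⟨g, hq.symm⟩).resolve_left hf
  rw [AdjoinRoot.mk_eq_zero]
  exact ⟨q', mul_left_cancel₀ hC.ne_zero (by linear_combination hq)⟩

end CommRing

theorem orderOf_mk_X_pos {K : Type*} [Field K] [Finite K] {f : K[X]} (h0 : f.coeff 0 ≠ 0) :
    0 < orderOf (Ideal.Quotient.mk (Ideal.span {f}) X) := by
  have hf : f ≠ 0 := fun h => h0 (by simp [h])
  have : Module.Finite K (K[X] ⧸ Ideal.span {f}) := (AdjoinRoot.powerBasis hf).finite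
  have : Finite (K[X] ⧸ Ideal.span {f}) := Module.finite_of_finite K
  rw [orderOf_pos_iff, isOfFinOrder_iff_isUnit]
  have hmk : Ideal.Quotient.mk (Ideal.span {f}) (X * -f.divX) =
      Ideal.Quotient.mk (Ideal.span {f}) (C (f.coeff 0)) := by
    rw [Ideal.Quotient.mk_eq_mk_iff_sub_mem, Ideal.mem_span_singleton]
    exact ⟨-1, by linear_combination -X_mul_divX_add f⟩
  rw [map_mul] at hmk
  exact isUnit_of_mul_isUnit_left (hmk ▸ (h0.isUnit.map C).map _)

section ReductionModN

variable {n : ℕ} {f g Q : ℤ[X]}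

theorem map_castRingHom_zmod_eq_iff :
    f.map (Int.castRingHom (ZMod n)) = g.map (Int.castRingHom (ZMod n)) ↔
      (n : ℤ[X]) ∣ f - g := by
  rw [← sub_eq_zero, ← Polynomial.map_sub, ← C_eq_natCast, C_dvd_iff_dvd_coeff,
    Polynomial.ext_iff]
  simp [← ZMod.intCast_zmod_eq_zero_iff_dvd]

theorem natCast_dvd_adjoinRoot_mk_iff :
    (n : AdjoinRoot Q) ∣ AdjoinRoot.mk Q f ↔
      Q.map (Int.castRingHom (ZMod n)) ∣ f.map (Int.castRingHom (ZMod n)) := by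
  constructor
  · rintro ⟨c, hc⟩
    obtain ⟨a, rfl⟩ := AdjoinRoot.mk_surjective c
    rw [← map_natCast (AdjoinRoot.mk Q), ← map_mul, AdjoinRoot.mk_eq_mk] at hc
    simpa using Polynomial.map_dvd (Int.castRingHom (ZMod n)) hc
  · rintro ⟨q', hq'⟩
    obtain ⟨q, rfl⟩ := map_surjective _ (ZMod.ringHom_surjective (Int.castRingHom (ZMod n))) q'
    rw [← Polynomial.map_mul, map_castRingHom_zmod_eq_iff] at hq'
    simpa using map_dvd (AdjoinRoot.mk Q) hq'

theorem mk_X_pow_eq_one_iff_s12 {k : ℕ} :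
    Ideal.Quotient.mk (Ideal.span {Q.map (Int.castRingHom (ZMod n))}) X ^ k = 1 ↔
      (n : AdjoinRoot Q) ∣ AdjoinRoot.root Q ^ k - 1 := by
  rw [← map_pow, ← map_one (Ideal.Quotient.mk _), Ideal.Quotient.mk_eq_mk_iff_sub_mem,
    Ideal.mem_span_singleton]
  have h := (natCast_dvd_adjoinRoot_mk_iff (n := n) (Q := Q) (f := X ^ k - 1)).symm
  simpa only [Polynomial.map_sub, Polynomial.map_pow, map_X, Polynomial.map_one, map_sub, map_pow,
    AdjoinRoot.mk_X, map_one] using h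

end ReductionModN

section FrobeniusLift

variable {p : ℕ} [Fact p.Prime] {Q : ℤ[X]}

theorem natCast_dvd_expand_sub_pow (f : ℤ[X]) : (p : ℤ[X]) ∣ expand ℤ p f - f ^ p := by
  rw [← map_castRingHom_zmod_eq_iff, map_expand, ZMod.expand_card, Polynomial.map_pow]

theorem natCast_dvd_of_sq_dvd_mul_pow (hQ : Squarefree (Q.map (Int.castRingHom (ZMod p))))
    {a : AdjoinRoot Q} {k : ℕ} (h : (p : AdjoinRoot Q) ^ 2 ∣ p * a ^ k) :
    (p : AdjoinRoot Q) ∣ a := by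
  have hCp : ¬ C (p : ℤ) ∣ Q := fun hdvd => hQ.ne_zero <| by
    simpa using map_castRingHom_zmod_eq_iff (g := 0).mpr (by simpa using hdvd)
  have hreg : IsRegular (p : AdjoinRoot Q) := by
    simpa using isRegular_adjoinRoot_of (Nat.prime_iff_prime_int.mp Fact.out) hCp
  obtain ⟨c, hc⟩ := h
  have hpow : (p : AdjoinRoot Q) ∣ a ^ k := ⟨c, hreg.left (by linear_combination hc)⟩
  obtain ⟨f, rfl⟩ := AdjoinRoot.mk_surjective a
  rw [← map_pow, natCast_dvd_adjoinRoot_mk_iff, Polynomial.map_pow] at hpow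
  exact natCast_dvd_adjoinRoot_mk_iff.mpr (hQ.isRadical k _ hpow)

theorem sq_dvd_root_pow_sub_one (hQ : Squarefree (Q.map (Int.castRingHom (ZMod p))))
    (hexp : (p : AdjoinRoot Q) ^ 2 ∣ AdjoinRoot.mk Q (expand ℤ p Q)) {m : ℕ}
    (hm : (p : AdjoinRoot Q) ∣ AdjoinRoot.root Q ^ m - 1) :
    (p : AdjoinRoot Q) ^ 2 ∣ AdjoinRoot.root Q ^ m - 1 := by
  have hpm : (p : AdjoinRoot Q) ^ 2 ∣ AdjoinRoot.root Q ^ (p * m) - 1 := by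
    simpa [mul_comm p m, pow_mul] using dvd_sub_pow_of_dvd_sub hm 1
  obtain ⟨a, ha⟩ := hm
  obtain ⟨f, rfl⟩ := AdjoinRoot.mk_surjective a
  have hQf : Q ∣ X ^ m - 1 - (p : ℤ[X]) * f := by
    rw [← AdjoinRoot.mk_eq_zero]
    simp [ha]
  have hφ : (p : AdjoinRoot Q) ^ 2 ∣
      AdjoinRoot.root Q ^ (p * m) - 1 - p * AdjoinRoot.mk Q (expand ℤ p f) := by
    simpa [← pow_mul] using
      hexp.trans (map_dvd (AdjoinRoot.mk Q) (_root_.map_dvd (expand ℤ p) hQf))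
  have hfrob : (p : AdjoinRoot Q) ^ 2 ∣
      p * AdjoinRoot.mk Q (expand ℤ p f) - p * AdjoinRoot.mk Q f ^ p := by
    rw [sq, ← mul_sub]
    exact mul_dvd_mul_left _
      (by simpa using map_dvd (AdjoinRoot.mk Q) (natCast_dvd_expand_sub_pow (p := p) f))
  have hpa : (p : AdjoinRoot Q) ∣ AdjoinRoot.mk Q f := by
    apply natCast_dvd_of_sq_dvd_mul_pow hQ (k := p)
    rw [← dvd_sub_right hpm]
    simpa using dvd_add hφ hfrob
  rw [ha, sq]
  exact mul_dvd_mul_left _ hpa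

end FrobeniusLift

section ConditionS

variable {Q : ℤ[X]}

theorem two_dvd_comp_neg_X_sub (f : ℤ[X]) : (2 : ℤ[X]) ∣ f.comp (-X) - f := by
  rw [← Nat.cast_ofNat, ← map_castRingHom_zmod_eq_iff, map_comp, Polynomial.map_neg, map_X,
    CharTwo.neg_eq, comp_X]

theorem conditionS_iff_dvd : conditionS Q ↔
    (8 : ℤ[X]) ∣ Q ^ 2 + Q.comp (-X) ^ 2 - C (2 * Q.leadingCoeff) * expand ℤ 2 Q := by
  rw [conditionS, map_castRingHom_zmod_eq_iff, expand_eq_comp_X_pow, Nat.cast_ofNat]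

theorem odd_leadingCoeff_comp_neg_X (hlead : Odd Q.leadingCoeff) :
    Odd (Q.comp (-X)).leadingCoeff := by
  rw [leadingCoeff_comp (by simp), leadingCoeff_neg, leadingCoeff_X]
  exact hlead.mul odd_neg_one.pow

theorem four_dvd_leadingCoeff_mul_expand_sub_of_conditionS (hlead : Odd Q.leadingCoeff)
    (hS : conditionS (Q.comp (-X))) :
    (4 : ℤ[X]) ∣ C (Q.comp (-X)).leadingCoeff * expand ℤ 2 Q - Q * Q.comp (-X) := by
  obtain ⟨s, hs⟩ := odd_leadingCoeff_comp_neg_X hlead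
  obtain ⟨G, hG⟩ := conditionS_iff_dvd.mp hS
  obtain ⟨D, hD⟩ := two_dvd_comp_neg_X_sub Q
  obtain ⟨H, hH⟩ := natCast_dvd_expand_sub_pow (p := 2) D
  have hcomp : (Q.comp (-X)).comp (-X) = Q := by simp [comp_assoc]
  have hexp : expand ℤ 2 (Q.comp (-X)) - expand ℤ 2 Q = 2 * expand ℤ 2 D := by
    rw [← map_sub, hD, map_mul, map_ofNat]
  have hsq : Q.comp (-X) ^ 2 + Q ^ 2 = 2 * (Q * Q.comp (-X) + 2 * D ^ 2) := by
    linear_combination (Q.comp (-X) - Q + 2 * D) * hD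
  rw [hcomp, hs] at hG
  rw [hs]
  simp only [map_mul, map_add, map_ofNat, map_one] at hG ⊢
  rw [Nat.cast_ofNat] at hH
  refine ⟨-G - C s * D ^ 2 - (2 * C s + 1) * H, ?_⟩
  apply mul_left_cancel₀ (two_ne_zero : (2 : ℤ[X]) ≠ 0)
  linear_combination hsq - hG - 2 * (2 * C s + 1) * hexp - 4 * (2 * C s + 1) * hH

theorem four_dvd_mk_expand_of_conditionS (hlead : Odd Q.leadingCoeff)
    (hS : conditionS (Q.comp (-X))) :
    (4 : AdjoinRoot Q) ∣ AdjoinRoot.mk Q (expand ℤ 2 Q) := by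
  have hcop : IsCoprime (4 : ℤ) (Q.comp (-X)).leadingCoeff := by
    rw [show (4 : ℤ) = 2 ^ 2 by norm_num]
    exact (Int.isCoprime_two_left.mpr (odd_leadingCoeff_comp_neg_X hlead)).pow_left
  have hdvd : (4 : AdjoinRoot Q) ∣ AdjoinRoot.of Q (Q.comp (-X)).leadingCoeff *
      AdjoinRoot.mk Q (expand ℤ 2 Q) := by
    simpa only [map_ofNat, map_sub, map_mul, AdjoinRoot.mk_self, AdjoinRoot.mk_C, zero_mul,
      sub_zero] using map_dvd (AdjoinRoot.mk Q)
        (four_dvd_leadingCoeff_mul_expand_sub_of_conditionS hlead hS)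
  have hcop' := hcop.map (AdjoinRoot.of Q)
  rw [map_ofNat] at hcop'
  exact hcop'.dvd_of_dvd_mul_left hdvd

theorem two_pow_dvd_root_pow_sub_one (hlead : Odd Q.leadingCoeff)
    (hsq : Squarefree (Q.map (Int.castRingHom (ZMod 2)))) (hS : conditionS (Q.comp (-X)))
    {m : ℕ} (hm : (2 : AdjoinRoot Q) ∣ AdjoinRoot.root Q ^ m - 1) {w : ℕ} (hw : 2 ≤ w) :
    (2 : AdjoinRoot Q) ^ w ∣ AdjoinRoot.root Q ^ (2 ^ (w - 2) * m) - 1 := by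
  obtain ⟨k, rfl⟩ := Nat.exists_eq_add_of_le hw
  have hmod4 : ((2 : ℕ) : AdjoinRoot Q) ^ 2 ∣ AdjoinRoot.root Q ^ m - 1 :=
    sq_dvd_root_pow_sub_one hsq (by norm_num [four_dvd_mk_expand_of_conditionS hlead hS])
      (mod_cast hm)
  simpa [← pow_mul, mul_comm m] using pow_add_dvd_pow_pow_sub_pow_pow (j := 1) hmod4 k

end ConditionS

theorem stmt12_general (Q : ℤ[X]) (hlead : Odd Q.leadingCoeff) (hconst : Odd (Q.coeff 0))
    (hsq : Squarefree (Q.map (Int.castRingHom (ZMod 2)))) (lam : ℕ)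
    (hlam : lam = orderOf (Ideal.Quotient.mk
      (Ideal.span {Q.map (Int.castRingHom (ZMod 2))}) (X : (ZMod 2)[X])))
    (hS : conditionS (Q.comp (-X))) (w : ℕ) (hw : 2 ≤ w) :
    (X ^ (2 ^ (w - 2) * lam) - 1 ∈ Ideal.span ({C ((2 : ℤ) ^ w), Q} : Set ℤ[X])) ∧
      orderOf (Ideal.Quotient.mk (Ideal.span {Q.map (Int.castRingHom (ZMod (2 ^ w)))})
        (X : (ZMod (2 ^ w))[X])) ≤ 2 ^ (w - 2) * lam := by
  have hpos : 0 < lam := by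
    rw [hlam]
    apply orderOf_mk_X_pos
    rw [coeff_map, eq_intCast, ZMod.intCast_eq_one_iff_odd.mpr hconst]
    exact one_ne_zero
  have hmod2 : (2 : AdjoinRoot Q) ∣ AdjoinRoot.root Q ^ lam - 1 :=
    mod_cast mk_X_pow_eq_one_iff_s12.mp (hlam ▸ pow_orderOf_eq_one _)
  have hmodw := two_pow_dvd_root_pow_sub_one hlead hsq hS hmod2 hw
  constructor
  · rw [← adjoinRoot_of_dvd_mk_iff]
    simpa using hmodw
  · apply orderOf_le_of_pow_eq_one (by positivity)
    rw [mk_X_pow_eq_one_iff_s12]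
    exact_mod_cast hmodw

theorem stmt12 (Q : Polynomial ℤ) (r : ℕ) (hr : Q.natDegree = r)
    (hmonic : Q.Monic) (hconst : Odd (Q.coeff 0))
    (hirr : Irreducible (Q.map (Int.castRingHom (ZMod 2))))
    (lam : ℕ)
    (hlam : lam = orderOf (Ideal.Quotient.mk
      (Ideal.span {Q.map (Int.castRingHom (ZMod 2))}) (X : Polynomial (ZMod 2))))
    (hS : conditionS (Q.comp (-X))) :
    ∀ w : ℕ, 2 ≤ w →
      (X ^ (2 ^ (w - 2) * lam) - 1 ∈
          Ideal.span ({C ((2 : ℤ) ^ w), Q} : Set (Polynomial ℤ))) ∧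
      orderOf (Ideal.Quotient.mk
          (Ideal.span {Q.map (Int.castRingHom (ZMod (2 ^ w)))})
          (X : Polynomial (ZMod (2 ^ w)))) ≤ 2 ^ (w - 2) * lam :=
  stmt12_general Q (hmonic.leadingCoeff ▸ odd_one) hconst hirr.squarefree lam hlam hS
end
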